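/- Let R be a commutative ring and let m be a positive integer that is invertible in R. Then there is an isomorphism of R-algebras R[X]/(X^m − 1) ≅ ∏_{d ∣ m} R[X]/(Φ_d(X)), where the product is over all positive divisors d of m and the isomorphism is induced by the canonical quotient maps R[X]/(X^m − 1) → R[X]/(Φ_d(X)). -/

import Mathlib

open Polynomial

/-!
Since `m` is a unit, `X ^ m - 1` is coprime to its derivative `m X ^ (m - 1)`, i.e. separable. Any
two factors `f`, `g` of a separable product `f * g * h` are coprime, because both the product and
its derivative lie in the ideal `(f, g)`. Hence the cyclotomic factors of `X ^ m - 1` are pairwise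
coprime and the Chinese remainder theorem applies.
-/

open Function (onFun)

theorem pairwise_isCoprime_of_separable_prod {S ι : Type*} [CommSemiring S] {s : Finset ι}
    {f : ι → S[X]} (hf : (∏ i ∈ s, f i).Separable) :
    (s : Set ι).Pairwise (onFun IsCoprime f) := by
  classical
  intro i hi j hj hij
  have mul_dvd_prod : f i * f j ∣ ∏ k ∈ s, f k := by
    rw [← Finset.prod_pair hij]
    exact Finset.prod_dvd_prod_of_subset _ _ f (Finset.insert_subset hi (by simpa using hj))
  exact (hf.of_dvd mul_dvd_prod).isCoprime

theorem separable_X_pow_sub_one_of_isUnit {R : Type*} [CommRing R] {n : ℕ}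
    (hn : IsUnit (n : R)) : (X ^ n - 1 : R[X]).Separable := by
  simpa using separable_X_pow_sub_C_unit 1 hn

theorem pairwise_isCoprime_cyclotomic_divisors {R : Type*} [CommRing R] {n : ℕ}
    (hn : IsUnit (n : R)) :
    (n.divisors : Set ℕ).Pairwise (onFun IsCoprime fun d ↦ cyclotomic d R) := by
  rcases n.eq_zero_or_pos with rfl | hpos
  · simp
  · apply pairwise_isCoprime_of_separable_prod
    rw [prod_cyclotomic_eq_X_pow_sub_one hpos]
    exact separable_X_pow_sub_one_of_isUnit hn

section ChineseRemainder

variable (R : Type*) {A ι : Type*} [CommSemiring R] [CommRing A] [Algebra R A]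

/-- The Chinese remainder isomorphism `Ideal.quotientInfRingEquivPiQuotient` for pairwise coprime
ideals of an `R`-algebra, as an isomorphism of `R`-algebras. -/
noncomputable def quotientInfAlgEquivPiQuotient [Finite ι] (I : ι → Ideal A)
    (hI : Pairwise (onFun IsCoprime I)) : (A ⧸ ⨅ i, I i) ≃ₐ[R] ∀ i, A ⧸ I i :=
  AlgEquiv.ofRingEquiv (f := Ideal.quotientInfRingEquivPiQuotient I hI) fun _ ↦ rfl

/-- The Chinese remainder isomorphism for pairwise coprime elements of an `R`-algebra. The family
is indexed by a finset, so that the left-hand side is the quotient by a product over `s`. -/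
noncomputable def quotientSpanProdAlgEquivPi {s : Finset ι} {f : ι → A}
    (hf : (s : Set ι).Pairwise (onFun IsCoprime f)) :
    (A ⧸ Ideal.span {∏ i ∈ s, f i}) ≃ₐ[R] ∀ i : s, A ⧸ Ideal.span {f i} :=
  have coprime_coe : Pairwise (onFun IsCoprime fun i : s ↦ f i) :=
    fun i j hij ↦ hf i.2 j.2 (Subtype.coe_ne_coe.2 hij)
  have span_prod_eq_iInf : Ideal.span {∏ i ∈ s, f i} = ⨅ i : s, Ideal.span {f i} := by
    rw [Ideal.iInf_span_singleton coprime_coe, Finset.prod_coe_sort]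
  (Ideal.quotientEquivAlgOfEq R span_prod_eq_iInf).trans <|
    quotientInfAlgEquivPiQuotient R (fun i : s ↦ Ideal.span {f i}) fun _ _ hij ↦
      (Ideal.isCoprime_span_singleton_iff _ _).2 (coprime_coe hij)

theorem quotientSpanProdAlgEquivPi_mk {s : Finset ι} {f : ι → A}
    (hf : (s : Set ι).Pairwise (onFun IsCoprime f)) (a : A) :
    quotientSpanProdAlgEquivPi R hf (Ideal.Quotient.mk _ a) =
      fun i : s ↦ Ideal.Quotient.mk (Ideal.span {f i}) a :=
  rfl

end ChineseRemainder

/-- If `m` is a positive integer invertible in the commutative ring `R`, then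
`R[X]/(X^m - 1)` is isomorphic as an `R`-algebra to the product over the positive divisors
`d` of `m` of the rings `R[X]/(Φ_d)`, the isomorphism being induced by the canonical
quotient maps. -/
theorem quotient_pow_sub_one_equiv_pi_cyclotomic {R : Type*} [CommRing R]
    (m : ℕ) (hm : 0 < m) (hu : IsUnit (m : R)) :
    ∃ e : (R[X] ⧸ Ideal.span {(X : R[X]) ^ m - 1}) ≃ₐ[R]
        (∀ d : m.divisors, R[X] ⧸ Ideal.span {cyclotomic (d : ℕ) R}),
      ∀ p : R[X],
        e (Ideal.Quotient.mk (Ideal.span {(X : R[X]) ^ m - 1}) p) =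
          fun d : m.divisors =>
            Ideal.Quotient.mk (Ideal.span {cyclotomic (d : ℕ) R}) p := by
  rw [← prod_cyclotomic_eq_X_pow_sub_one hm R]
  have cyclotomic_coprime := pairwise_isCoprime_cyclotomic_divisors hu
  exact ⟨quotientSpanProdAlgEquivPi R cyclotomic_coprime,
    quotientSpanProdAlgEquivPi_mk R cyclotomic_coprime⟩
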